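/- arXiv:2410.00276 — 9 statements merged into one kernel-verified Lean document; each statement's English description precedes it below -/
import Mathlib

section
/- Let I and J be types. For an injective function g : I → J, define the pointed map g̃ : Option J → Option I by g̃ (some j) = some i if g i = j (such i is unique by injectivity), g̃ (some j) = none if j is not in the range of g, and g̃ none = none. Then the assignment g ↦ g̃ is a bijection from the set of injective functions I → J onto the set of functions h : Option J → Option I such that h none = none, h is surjective, and h is injective away from the basepoint (i.e. h a = h b ≠ none implies a = b). -/
open Classical in
/-- The pointed map `g̃ : Option J → Option I` associated to a function `g : I → J`:
`g̃ (some j) = some i` for the (chosen) `i` with `g i = j` when `j` is in the range of `g`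
(this `i` is unique when `g` is injective), `g̃ (some j) = none` when `j` is not in the
range of `g`, and `g̃ none = none`. -/
noncomputable def tilde {I J : Type} (g : I → J) : Option J → Option I :=
  fun o => match o with
  | none => none
  | some j => if h : ∃ i, g i = j then some h.choose else none

theorem tilde_eq_some_iff {I J : Type} {g : I → J} (hg : Function.Injective g)
    (o : Option J) (i : I) : tilde g o = some i ↔ o = some (g i) := by
  cases o with
  | none => simp [tilde]
  | some j =>
    by_cases h : ∃ i, g i = j
    · have hc := h.choose_spec
      simp only [tilde, dif_pos h, Option.some.injEq]
      constructor
      · intro e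
        rw [← e]
        exact hc.symm
      · intro e
        exact hg (hc.trans e)
    · simp only [tilde, dif_neg h, Option.some.injEq]
      constructor
      · intro e
        cases e
      · intro e
        exact absurd ⟨i, e.symm⟩ h

/-- The assignment `g ↦ g̃` is a bijection from the set of injective functions `I → J`
onto the set of pointed maps `h : Option J → Option I` (i.e. `h none = none`) which are
surjective and injective away from the basepoint. -/
theorem stmt0 (I J : Type) :
    Set.BijOn (fun g : I → J => tilde g)
      {g : I → J | Function.Injective g}
      {h : Option J → Option I |
        h none = none ∧ Function.Surjective h ∧
        ∀ a b : Option J, h a = h b → h a ≠ none → a = b} := by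
  refine ⟨?_, ?_, ?_⟩
  · intro g hg
    refine ⟨rfl, ?_, ?_⟩
    · intro o
      cases o with
      | none => exact ⟨none, rfl⟩
      | some i => exact ⟨some (g i), (tilde_eq_some_iff hg _ _).2 rfl⟩
    · intro a b hab ha
      obtain ⟨i, hi⟩ := Option.ne_none_iff_exists'.1 ha
      have h1 := (tilde_eq_some_iff hg _ _).1 hi
      have h2 := (tilde_eq_some_iff hg _ _).1 (hab.symm.trans hi)
      exact h1.trans h2.symm
  · intro g hg g' hg' e
    funext i
    have h1 : tilde g (some (g i)) = some i := (tilde_eq_some_iff hg _ _).2 rfl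
    have h2 : tilde g' (some (g i)) = some i := (congrFun e (some (g i))).symm.trans h1
    exact Option.some.inj ((tilde_eq_some_iff hg' _ _).1 h2)
  · rintro h ⟨h0, hs, hi⟩
    have hex : ∀ i, ∃ j, h (some j) = some i := by
      intro i
      obtain ⟨o, ho⟩ := hs (some i)
      cases o with
      | none => rw [h0] at ho; cases ho
      | some j => exact ⟨j, ho⟩
    choose g hgs using hex
    have hg : Function.Injective g := by
      intro a b e
      have h1 := hgs a
      rw [e, hgs b] at h1
      exact (Option.some.inj h1).symm
    refine ⟨g, hg, ?_⟩
    funext o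
    apply Option.ext
    intro i
    refine (tilde_eq_some_iff hg o i).trans ?_
    constructor
    · intro e
      rw [e]
      exact hgs i
    · intro e
      exact hi _ _ (e.trans (hgs i).symm) (by rw [e]; simp)
end

section
/- Let R be a ring and let (X, d) be a chain complex of pointed sets. For each n ∈ ℤ let Mₙ be the R-module of finitely supported functions (Xₙ \ {∗}) →₀ R, and let Dₙ : Mₙ → Mₙ₋₁ be the R-linear map determined on basis vectors by Dₙ(e_x) = e_{dₙ x} if dₙ x ≠ ∗, and Dₙ(e_x) = 0 if dₙ x = ∗. Then Dₙ₋₁ ∘ Dₙ = 0 for all n, and for each n there is an R-module isomorphism (ker Dₙ) / (range Dₙ₊₁) ≅ (Hₙ(X) \ {∗}) →₀ R, i.e. the homology of the complex of free R-modules is free on the set-level homology. -/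
/-- The data of a (possible) chain complex of pointed sets: a ℤ-indexed family of types
`X n` with basepoints `pt n` and differentials `d n : X n → X (n-1)`. -/
structure PreCC where
  X : ℤ → Type
  pt : ∀ n, X n
  d : ∀ n, X n → X (n - 1)

/-- `C` is a chain complex of pointed sets: the differentials are pointed, injective away
from the basepoint, and consecutive differentials compose to the constant map at the
basepoint. -/
def PreCC.IsComplex (C : PreCC) : Prop :=
  (∀ n, C.d n (C.pt n) = C.pt (n - 1)) ∧
  (∀ n, ∀ a b : C.X n, C.d n a = C.d n b → C.d n a ≠ C.pt (n - 1) → a = b) ∧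
  (∀ n, ∀ x : C.X n, C.d (n - 1) (C.d n x) = C.pt (n - 1 - 1))

/-- Transport along an equality of indices. -/
def PreCC.castX (C : PreCC) {m n : ℤ} (h : m = n) : C.X m → C.X n :=
  fun x => h ▸ x

/-- Membership in the `n`-th homology `Hₙ(C) = {x ∈ Xₙ : x ≠ ∗, dₙ x = ∗, x ∉ dₙ₊₁(Xₙ₊₁)} ∪ {∗}`. -/
def Hmem (C : PreCC) (n : ℤ) (x : C.X n) : Prop :=
  x = C.pt n ∨ (x ≠ C.pt n ∧ C.d n x = C.pt (n - 1) ∧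
    ∀ z : C.X (n + 1), C.castX (show n + 1 - 1 = n by omega) (C.d (n + 1) z) ≠ x)

/-- The `n`-th homology of `C`, as a pointed set. -/
def HT (C : PreCC) (n : ℤ) : Type := {x : C.X n // Hmem C n x}

/-- The basepoint of the `n`-th homology. -/
def Hpt (C : PreCC) (n : ℤ) : HT C n := ⟨C.pt n, Or.inl rfl⟩

/-- A chain map `C → D`: a family of pointed maps, each injective away from the
basepoint, commuting with the differentials. -/
def IsChainMap (C D : PreCC) (f : ∀ n, C.X n → D.X n) : Prop :=
  (∀ n, f n (C.pt n) = D.pt n) ∧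
  (∀ n, ∀ a b : C.X n, f n a = f n b → f n a ≠ D.pt n → a = b) ∧
  (∀ n, ∀ x : C.X n, f (n - 1) (C.d n x) = D.d n (f n x))

open Classical in
/-- The induced map on homology: `x ↦ fₙ(x)` if `fₙ(x) ∈ Hₙ(D)`, and `∗` otherwise. -/
noncomputable def Hmap (C D : PreCC) (f : ∀ n, C.X n → D.X n) (n : ℤ) :
    HT C n → HT D n :=
  fun x => if h : Hmem D n (f n x.1) then ⟨f n x.1, h⟩ else Hpt D n

/-- A chain complex of pointed sets is exact if all its homology pointed sets are trivial. -/
def PreCC.Exact (C : PreCC) : Prop :=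
  ∀ n, ∀ x : C.X n, Hmem C n x → x = C.pt n

open Classical in
/-- The differential of the associated complex of free `R`-modules
`Mₙ = (Xₙ \ {∗}) →₀ R`, determined on basis vectors by `Dₙ(e_x) = e_{dₙ x}` if
`dₙ x ≠ ∗` and `Dₙ(e_x) = 0` if `dₙ x = ∗`. -/
noncomputable def Dmap (C : PreCC) (R : Type) [Ring R] (n : ℤ) :
    ({x : C.X n // x ≠ C.pt n} →₀ R) →ₗ[R]
      ({x : C.X (n - 1) // x ≠ C.pt (n - 1)} →₀ R) :=
  Finsupp.lsum ℕ fun x : {x : C.X n // x ≠ C.pt n} =>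
    if h : C.d n x.1 ≠ C.pt (n - 1) then Finsupp.lsingle ⟨C.d n x.1, h⟩ else 0

/-- Transport of the free modules along an equality of indices. -/
noncomputable def castM (C : PreCC) (R : Type) [Ring R] {m n : ℤ} (h : m = n) :
    ({x : C.X m // x ≠ C.pt m} →₀ R) ≃ₗ[R] ({x : C.X n // x ≠ C.pt n} →₀ R) := by
  subst h; exact LinearEquiv.refl R _

/-- The quotient of a submodule `p` by a submodule `q` of `p`. -/
noncomputable abbrev SubQuot {R M : Type} [Ring R] [AddCommGroup M] [Module R M]
    (p : Submodule R M) (q : Submodule R p) : Type :=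
  @HasQuotient.Quotient ↥p (Submodule R ↥p)
    (@Submodule.hasQuotient R ↥p _ inferInstance inferInstance) q

theorem Dmap_single_ne (C : PreCC) (R : Type) [Ring R] (n : ℤ)
    (x : {x : C.X n // x ≠ C.pt n}) (r : R) (h : C.d n x.1 ≠ C.pt (n - 1)) :
    Dmap C R n (Finsupp.single x r) = Finsupp.single ⟨C.d n x.1, h⟩ r := by
  simp [Dmap, h]

theorem Dmap_single_eq (C : PreCC) (R : Type) [Ring R] (n : ℤ)
    (x : {x : C.X n // x ≠ C.pt n}) (r : R) (h : C.d n x.1 = C.pt (n - 1)) :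
    Dmap C R n (Finsupp.single x r) = 0 := by
  simp [Dmap, h]

theorem Dmap_apply_d (C : PreCC) (hC : C.IsComplex) (R : Type) [Ring R] (n : ℤ)
    (x : {x : C.X n // x ≠ C.pt n}) (h : C.d n x.1 ≠ C.pt (n - 1))
    (f : {x : C.X n // x ≠ C.pt n} →₀ R) :
    Dmap C R n f ⟨C.d n x.1, h⟩ = f x := by
  classical
  induction f using Finsupp.induction_linear with
  | zero => simp
  | add f g hf hg => simp [hf, hg]
  | single y r =>
    by_cases hy : C.d n y.1 = C.pt (n - 1)
    · rw [Dmap_single_eq C R n y r hy]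
      have : y ≠ x := by rintro rfl; exact h hy
      simp [Finsupp.single_apply, this]
    · rw [Dmap_single_ne C R n y r hy]
      by_cases hxy : y = x
      · subst hxy; simp
      · have : C.d n y.1 ≠ C.d n x.1 := fun e => hxy (Subtype.ext (hC.2.1 n _ _ e hy))
        simp [Finsupp.single_apply, this, hxy]

theorem cast_single_ne (C : PreCC) (R : Type) [Ring R] {m n : ℤ} (e : m - 1 = n)
    (z : {x : C.X m // x ≠ C.pt m}) (r : R) (h : C.castX e (C.d m z.1) ≠ C.pt n) :
    castM C R e (Dmap C R m (Finsupp.single z r)) =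
      Finsupp.single ⟨C.castX e (C.d m z.1), h⟩ r := by
  subst e
  exact Dmap_single_ne C R m z r h

theorem cast_single_eq (C : PreCC) (R : Type) [Ring R] {m n : ℤ} (e : m - 1 = n)
    (z : {x : C.X m // x ≠ C.pt m}) (r : R) (h : C.castX e (C.d m z.1) = C.pt n) :
    castM C R e (Dmap C R m (Finsupp.single z r)) = 0 := by
  subst e
  exact Dmap_single_eq C R m z r h

theorem cast_pt (C : PreCC) (hC : C.IsComplex) {m n : ℤ} (e : m - 1 = n) :
    C.castX e (C.d m (C.pt m)) = C.pt n := by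
  subst e
  exact hC.1 m

def hincl (C : PreCC) (n : ℤ) (x : {x : C.X n // Hmem C n x ∧ x ≠ C.pt n}) :
    {x : C.X n // x ≠ C.pt n} := ⟨x.1, x.2.2⟩

theorem hincl_inj (C : PreCC) (n : ℤ) : Function.Injective (hincl C n) := by
  intro a b h
  exact Subtype.ext (congrArg (fun t => t.1) h)

noncomputable def resH (C : PreCC) (R : Type) [Ring R] (n : ℤ) :
    ({x : C.X n // x ≠ C.pt n} →₀ R) →ₗ[R]
      ({x : C.X n // Hmem C n x ∧ x ≠ C.pt n} →₀ R) :=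
  Finsupp.lcomapDomain (hincl C n) (hincl_inj C n)

theorem resH_apply (C : PreCC) (R : Type) [Ring R] (n : ℤ)
    (f : {x : C.X n // x ≠ C.pt n} →₀ R) (x) : resH C R n f x = f (hincl C n x) := rfl

theorem Dmap_comp (R : Type) [Ring R] (C : PreCC) (hC : C.IsComplex) (n : ℤ) :
    (Dmap C R (n - 1)).comp (Dmap C R n) = 0 := by
  refine Finsupp.lhom_ext fun x r => ?_
  by_cases h : C.d n x.1 = C.pt (n - 1)
  · simp [Dmap_single_eq C R n x r h]
  · rw [LinearMap.comp_apply, Dmap_single_ne C R n x r h,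
      Dmap_single_eq C R (n - 1) _ r (hC.2.2 n x.1)]
    rfl

theorem resH_surj (R : Type) [Ring R] (C : PreCC) (n : ℤ) :
    Function.Surjective ((resH C R n).comp (LinearMap.ker (Dmap C R n)).subtype) := by
  intro g
  refine ⟨⟨Finsupp.mapDomain (hincl C n) g, ?_⟩, ?_⟩
  · rw [LinearMap.mem_ker]
    induction g using Finsupp.induction_linear with
    | zero => simp
    | add f g hf hg => rw [Finsupp.mapDomain_add, map_add, hf, hg, add_zero]
    | single y r =>
      rw [Finsupp.mapDomain_single]
      refine Dmap_single_eq C R n _ r ?_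
      rcases y.2.1 with h | h
      · exact absurd h y.2.2
      · exact h.2.1
  · ext x
    exact Finsupp.mapDomain_apply (hincl_inj C n) g x

theorem resH_ker (R : Type) [Ring R] (C : PreCC) (hC : C.IsComplex) (n : ℤ)
    (e : n + 1 - 1 = n) :
    (LinearMap.range ((castM C R e).toLinearMap.comp
            (Dmap C R (n + 1)))).comap (LinearMap.ker (Dmap C R n)).subtype =
    LinearMap.ker ((resH C R n).comp (LinearMap.ker (Dmap C R n)).subtype) := by
  classical
  ext ⟨f, hf⟩
  simp only [Submodule.mem_comap, LinearMap.mem_ker, LinearMap.comp_apply,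
    Submodule.subtype_apply]
  constructor
  · rintro ⟨g, rfl⟩
    clear hf
    simp only [LinearMap.comp_apply, LinearEquiv.coe_coe]
    induction g using Finsupp.induction_linear with
    | zero => simp
    | add f g hf hg => simp only [map_add, hf, hg, add_zero]
    | single z r =>
      by_cases h : C.castX e (C.d (n + 1) z.1) = C.pt n
      · rw [cast_single_eq C R e z r h, map_zero]
      · rw [cast_single_ne C R e z r h]
        ext x
        rw [resH_apply, Finsupp.single_apply, if_neg]
        · rfl
        · intro hx
          have hx' : C.castX e (C.d (n + 1) z.1) = x.1 := congrArg (fun t => t.1) hx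
          rcases x.2.1 with h' | h'
          · exact x.2.2 h'
          · exact h'.2.2 z.1 hx'
  · intro h0
    rw [← Finsupp.sum_single f]
    refine Submodule.sum_mem _ fun x hx => ?_
    have hfx : f x ≠ 0 := Finsupp.mem_support_iff.1 hx
    have hd : C.d n x.1 = C.pt (n - 1) := by
      by_contra h
      apply hfx
      rw [← Dmap_apply_d C hC R n x h f, LinearMap.mem_ker.1 hf]
      rfl
    have hH : ¬ Hmem C n x.1 := fun h => hfx (DFunLike.congr_fun h0 ⟨x.1, h, x.2⟩)
    obtain ⟨z, hz⟩ : ∃ z, C.castX e (C.d (n + 1) z) = x.1 := by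
      by_contra h
      push Not at h
      exact hH (Or.inr ⟨x.2, hd, h⟩)
    have hzp : z ≠ C.pt (n + 1) := by
      rintro rfl
      exact x.2 (hz.symm.trans (cast_pt C hC e))
    refine ⟨Finsupp.single ⟨z, hzp⟩ (f x), ?_⟩
    have hne : C.castX e (C.d (n + 1) z) ≠ C.pt n := by rw [hz]; exact x.2
    have := cast_single_ne C R e ⟨z, hzp⟩ (f x) hne
    refine this.trans ?_
    congr 1
    exact Subtype.ext hz

/-- For a chain complex of pointed sets `C` and a ring `R`, the free modules
`Mₙ = (Xₙ \ {∗}) →₀ R` with the differentials `Dₙ` form a chain complex of `R`-modules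
(`Dₙ₋₁ ∘ Dₙ = 0`), and its `n`-th homology `ker Dₙ / range Dₙ₊₁` is isomorphic as an
`R`-module to the free module on `Hₙ(C) \ {∗}`. -/
theorem stmt2 (R : Type) [Ring R] (C : PreCC) (hC : C.IsComplex) (n : ℤ) :
    (Dmap C R (n - 1)).comp (Dmap C R n) = 0 ∧
    Nonempty
      (SubQuot (LinearMap.ker (Dmap C R n))
          ((LinearMap.range ((castM C R (show n + 1 - 1 = n by omega)).toLinearMap.comp
            (Dmap C R (n + 1)))).comap (LinearMap.ker (Dmap C R n)).subtype)
        ≃ₗ[R] ({x : C.X n // Hmem C n x ∧ x ≠ C.pt n} →₀ R)) := by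
  refine ⟨Dmap_comp R C hC n, ⟨?_⟩⟩
  exact (Submodule.quotEquivOfEq _ _ (resH_ker R C hC n _)).trans
    (LinearMap.quotKerEquivOfSurjective _ (resH_surj R C n))
end

section
/- (Weak Snake Lemma for pointed sets.) Let A →ⁱ B →ᵖ C and A' →ⁱ' B' →ᵖ' C' be short exact sequences of pointed sets: i and i' are injective pointed maps, p and p' are surjective pointed maps injective away from the basepoint, p⁻¹(∗) = i(A), and p'⁻¹(∗) = i'(A'). Let f : A → A', g : B → B', h : C → C' be pointed maps, each injective away from the basepoint, with g ∘ i = i' ∘ f and h ∘ p = p' ∘ g. Then: i restricts to a map ker f → ker g, p restricts to a map ker g → ker h, i' induces a map coker f → coker g (sending a' to i'(a') if i'(a') ∉ g(B), else to ∗), p' induces a map coker g → coker h (sending b' to p'(b') if p'(b') ∉ h(C), else to ∗), and there exists a pointed map δ : ker h → coker f such that all six maps are injective away from the basepoint and the six-term sequence ker f → ker g → ker h →^δ coker f → coker g → coker h is exact at ker g, ker h, coker f and coker g; moreover the first map ker f → ker g is injective and the last map coker g → coker h is surjective. -/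
open Classical in
/-- **Weak Snake Lemma for pointed sets.** Pointed sets are modeled as types with a
chosen basepoint. Given a morphism `(f, g, h)` of short exact sequences of pointed sets
`A →ⁱ B →ᵖ C` and `A' →ⁱ' B' →ᵖ' C'` (with `i, i'` injective pointed maps, `p, p'`
surjective pointed maps injective away from the basepoint, and `p⁻¹(∗) = i(A)`,
`p'⁻¹(∗) = i'(A')`), where `f, g, h` are pointed maps injective away from the basepoint,
there is a six-term exact sequence
`ker f → ker g → ker h → coker f → coker g → coker h` whose maps are all injective away
from the basepoint; moreover the first map is injective and the last map is surjective. -/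
theorem stmt4 {A B C A' B' C' : Type}
    (a0 : A) (b0 : B) (c0 : C) (a0' : A') (b0' : B') (c0' : C')
    (i : A → B) (p : B → C) (i' : A' → B') (p' : B' → C')
    (f : A → A') (g : B → B') (h : C → C')
    (hi0 : i a0 = b0) (hp0 : p b0 = c0) (hi0' : i' a0' = b0') (hp0' : p' b0' = c0')
    (hf0 : f a0 = a0') (hg0 : g b0 = b0') (hh0 : h c0 = c0')
    (hi_inj : Function.Injective i)
    (hp_surj : Function.Surjective p)
    (hp_inj : ∀ x y : B, p x = p y → p x ≠ c0 → x = y)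
    (hex : ∀ b : B, p b = c0 ↔ b ∈ Set.range i)
    (hi'_inj : Function.Injective i')
    (hp'_surj : Function.Surjective p')
    (hp'_inj : ∀ x y : B', p' x = p' y → p' x ≠ c0' → x = y)
    (hex' : ∀ b : B', p' b = c0' ↔ b ∈ Set.range i')
    (hf_inj : ∀ x y : A, f x = f y → f x ≠ a0' → x = y)
    (hg_inj : ∀ x y : B, g x = g y → g x ≠ b0' → x = y)
    (hh_inj : ∀ x y : C, h x = h y → h x ≠ c0' → x = y)
    (hsq1 : ∀ a : A, g (i a) = i' (f a))
    (hsq2 : ∀ b : B, h (p b) = p' (g b)) :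
    -- kernels and cokernels, as pointed sets
    let Kf : Type := {x : A // f x = a0'}
    let Kg : Type := {x : B // g x = b0'}
    let Kh : Type := {x : C // h x = c0'}
    let Qf : Type := {x : A' // x = a0' ∨ x ∉ Set.range f}
    let Qg : Type := {x : B' // x = b0' ∨ x ∉ Set.range g}
    let Qh : Type := {x : C' // x = c0' ∨ x ∉ Set.range h}
    -- the restriction of i to kernels
    let α : Kf → Kg := fun x => ⟨i x.1, by rw [hsq1, x.2, hi0']⟩
    -- the restriction of p to kernels
    let β : Kg → Kh := fun x => ⟨p x.1, by rw [hsq2, x.2, hp0']⟩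
    -- the map induced by i' on cokernels
    let γ : Qf → Qg := fun x =>
      if hx : i' x.1 ∈ Set.range g then ⟨b0', Or.inl rfl⟩ else ⟨i' x.1, Or.inr hx⟩
    -- the map induced by p' on cokernels
    let ε : Qg → Qh := fun x =>
      if hx : p' x.1 ∈ Set.range h then ⟨c0', Or.inl rfl⟩ else ⟨p' x.1, Or.inr hx⟩
    ∃ δ : Kh → Qf,
      -- δ is pointed
      δ ⟨c0, hh0⟩ = ⟨a0', Or.inl rfl⟩ ∧
      -- all maps in the sequence are injective away from the basepoint
      (∀ x y : Kf, α x = α y → α x ≠ (⟨b0, hg0⟩ : Kg) → x = y) ∧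
      (∀ x y : Kg, β x = β y → β x ≠ (⟨c0, hh0⟩ : Kh) → x = y) ∧
      (∀ x y : Kh, δ x = δ y → δ x ≠ (⟨a0', Or.inl rfl⟩ : Qf) → x = y) ∧
      (∀ x y : Qf, γ x = γ y → γ x ≠ (⟨b0', Or.inl rfl⟩ : Qg) → x = y) ∧
      (∀ x y : Qg, ε x = ε y → ε x ≠ (⟨c0', Or.inl rfl⟩ : Qh) → x = y) ∧
      -- exactness at ker g, ker h, coker f, coker g
      (∀ t : Kg, β t = (⟨c0, hh0⟩ : Kh) ↔ t ∈ Set.range α) ∧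
      (∀ t : Kh, δ t = (⟨a0', Or.inl rfl⟩ : Qf) ↔ t ∈ Set.range β) ∧
      (∀ t : Qf, γ t = (⟨b0', Or.inl rfl⟩ : Qg) ↔ t ∈ Set.range δ) ∧
      (∀ t : Qg, ε t = (⟨c0', Or.inl rfl⟩ : Qh) ↔ t ∈ Set.range γ) ∧
      -- the first map is injective and the last map is surjective
      Function.Injective α ∧ Function.Surjective ε := by
  intro Kf Kg Kh Qf Qg Qh α β γ ε
  have hγ : ∀ t : Qf, γ t = (⟨b0', Or.inl rfl⟩ : Qg) ↔ i' t.1 ∈ Set.range g := by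
    intro t
    by_cases hx : i' t.1 ∈ Set.range g
    · exact iff_of_true (dif_pos hx) hx
    · simp only [γ, hx, dif_neg, not_false_eq_true, iff_false]
      intro e
      exact hx ⟨b0, by rw [hg0]; exact (congrArg Subtype.val e).symm⟩
  have hγ2 : ∀ t : Qf, i' t.1 ∉ Set.range g → (γ t).1 = i' t.1 := by
    intro t hx
    simp only [γ, hx, dif_neg, not_false_eq_true]
  have hε : ∀ t : Qg, ε t = (⟨c0', Or.inl rfl⟩ : Qh) ↔ p' t.1 ∈ Set.range h := by
    intro t
    by_cases hx : p' t.1 ∈ Set.range h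
    · exact iff_of_true (dif_pos hx) hx
    · simp only [ε, hx, dif_neg, not_false_eq_true, iff_false]
      intro e
      exact hx ⟨c0, by rw [hh0]; exact (congrArg Subtype.val e).symm⟩
  have hε2 : ∀ t : Qg, p' t.1 ∉ Set.range h → (ε t).1 = p' t.1 := by
    intro t hx
    simp only [ε, hx, dif_neg, not_false_eq_true]
  have key : ∀ c : Kh, ∃ q : Qf, (c.1 = c0 → q.1 = a0') ∧
      (c.1 ≠ c0 → ∃ b, p b = c.1 ∧ g b = i' q.1) := by
    rintro ⟨c, hc⟩
    by_cases h0 : c = c0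
    · exact ⟨⟨a0', Or.inl rfl⟩, fun _ => rfl, fun h => absurd h0 h⟩
    · obtain ⟨b, rfl⟩ := hp_surj c
      obtain ⟨a', ha'⟩ := (hex' (g b)).1 (by rw [← hsq2, hc])
      refine ⟨⟨a', ?_⟩, fun h => absurd h h0, fun _ => ⟨b, rfl, ha'.symm⟩⟩
      by_contra hcon
      push Not at hcon
      obtain ⟨h1, a, rfl⟩ := hcon
      refine h0 ((hex b).2 ⟨a, hg_inj _ _ (by rw [hsq1, ha']) ?_⟩)
      rw [hsq1, ← hi0']
      exact fun e => h1 (hi'_inj e)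
  choose δ hδ0 hδ1 using key
  have ha0 : ∀ a', i' a' = b0' → a' = a0' := fun a' e => hi'_inj (e.trans hi0'.symm)
  have hpi : ∀ a, p (i a) = c0 := fun a => (hex _).2 ⟨a, rfl⟩
  have hpi' : ∀ a, p' (i' a) = c0' := fun a => (hex' _).2 ⟨a, rfl⟩
  have hαinj : Function.Injective α := fun x y e =>
    Subtype.ext (hi_inj (congrArg Subtype.val e))
  refine ⟨δ, Subtype.ext (hδ0 _ rfl), fun x y e _ => hαinj e, ?_, ?_, ?_, ?_, ?_, ?_, ?_, ?_,
    hαinj, ?_⟩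
  · intro x y e ne
    exact Subtype.ext (hp_inj _ _ (congrArg Subtype.val e) fun e' => ne (Subtype.ext e'))
  · intro x y e ne
    have ne' : (δ x).1 ≠ a0' := fun e' => ne (Subtype.ext e')
    obtain ⟨b, hb, hb'⟩ := hδ1 x fun e' => ne' (hδ0 x e')
    obtain ⟨d, hd, hd'⟩ := hδ1 y fun e' => ne' (by rw [e]; exact hδ0 y e')
    have : b = d := hg_inj _ _ (by rw [hb', hd', e]) (by
      rw [hb']; exact fun e' => ne' (ha0 _ e'))
    exact Subtype.ext (by rw [← hb, ← hd, this])
  · intro x y e ne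
    have hx : i' x.1 ∉ Set.range g := fun e' => ne ((hγ x).2 e')
    have hy : i' y.1 ∉ Set.range g := fun e' => ne (e.trans ((hγ y).2 e'))
    exact Subtype.ext (hi'_inj (by rw [← hγ2 x hx, ← hγ2 y hy, e]))
  · intro x y e ne
    have hx : p' x.1 ∉ Set.range h := fun e' => ne ((hε x).2 e')
    have hy : p' y.1 ∉ Set.range h := fun e' => ne (e.trans ((hε y).2 e'))
    exact Subtype.ext (hp'_inj _ _ (by rw [← hε2 x hx, ← hε2 y hy, e])
      fun e' => hx ⟨c0, by rw [hh0, e']⟩)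
  · intro t
    constructor
    · intro e
      obtain ⟨a, ha⟩ := (hex t.1).1 (congrArg Subtype.val e)
      exact ⟨⟨a, ha0 _ (by rw [← hsq1, ha, t.2])⟩, Subtype.ext ha⟩
    · rintro ⟨a, rfl⟩
      exact Subtype.ext (hpi a.1)
  · intro t
    constructor
    · intro e
      by_cases h0 : t.1 = c0
      · exact ⟨⟨b0, hg0⟩, Subtype.ext (hp0.trans h0.symm)⟩
      · obtain ⟨b, hb, hb'⟩ := hδ1 t h0
        exact ⟨⟨b, by rw [hb', e, hi0']⟩, Subtype.ext hb⟩
    · rintro ⟨b, rfl⟩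
      by_cases h0 : (β b).1 = c0
      · exact Subtype.ext (hδ0 _ h0)
      · obtain ⟨d, hd, hd'⟩ := hδ1 _ h0
        have : d = b.1 := hp_inj _ _ hd (by rw [hd]; exact h0)
        exact Subtype.ext (ha0 _ (by rw [← hd', this, b.2]))
  · intro t
    rw [hγ]
    constructor
    · rintro ⟨b, hb⟩
      have hc : h (p b) = c0' := by rw [hsq2, hb, hpi']
      refine ⟨⟨p b, hc⟩, Subtype.ext ?_⟩
      by_cases h0 : p b = c0
      · rw [hδ0 _ h0]
        obtain ⟨a, rfl⟩ := (hex b).1 h0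
        rcases t.2 with h1 | h1
        · exact h1.symm
        · exact absurd ⟨a, hi'_inj (by rw [← hsq1, hb])⟩ h1
      · obtain ⟨d, hd, hd'⟩ := hδ1 ⟨p b, hc⟩ h0
        have : d = b := hp_inj _ _ hd (by rw [hd]; exact h0)
        exact hi'_inj (by rw [← hd', this, hb])
    · rintro ⟨c, rfl⟩
      by_cases h0 : c.1 = c0
      · exact ⟨b0, by rw [hδ0 _ h0, hg0, hi0']⟩
      · obtain ⟨d, hd, hd'⟩ := hδ1 c h0
        exact ⟨d, hd'⟩
  · intro t
    rw [hε]
    constructor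
    · rintro ⟨c, hc⟩
      obtain ⟨b, rfl⟩ := hp_surj c
      have h0 : p' t.1 = c0' := by
        by_contra h0
        have : t.1 = g b := hp'_inj _ _ (by rw [← hc, hsq2]) h0
        rcases t.2 with h1 | h1
        · exact h0 (by rw [h1, hp0'])
        · exact h1 ⟨b, this.symm⟩
      obtain ⟨a', ha'⟩ := (hex' _).1 h0
      by_cases h1 : t.1 = b0'
      · refine ⟨⟨a0', Or.inl rfl⟩, ?_⟩
        have e : t = (⟨b0', Or.inl rfl⟩ : Qg) := Subtype.ext h1
        rw [e, hγ]
        exact ⟨b0, by rw [hg0, hi0']⟩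
      · have h2 : t.1 ∉ Set.range g := t.2.resolve_left h1
        refine ⟨⟨a', Or.inr ?_⟩, Subtype.ext ?_⟩
        · rintro ⟨a, rfl⟩
          exact h2 ⟨i a, by rw [hsq1, ha']⟩
        · rw [hγ2 _ (by rw [ha']; exact h2)]
          exact ha'
    · rintro ⟨q, rfl⟩
      refine ⟨c0, ?_⟩
      by_cases hq : i' q.1 ∈ Set.range g
      · rw [(hγ q).2 hq, hh0, hp0']
      · rw [hγ2 q hq, hh0, hpi']
  · intro y
    by_cases h0 : y.1 = c0'
    · refine ⟨⟨b0', Or.inl rfl⟩, ?_⟩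
      have e : y = (⟨c0', Or.inl rfl⟩ : Qh) := Subtype.ext h0
      rw [e, hε]
      exact ⟨c0, by rw [hh0, hp0']⟩
    · have h2 : y.1 ∉ Set.range h := y.2.resolve_left h0
      obtain ⟨b', hb'⟩ := hp'_surj y.1
      refine ⟨⟨b', Or.inr ?_⟩, Subtype.ext ?_⟩
      · rintro ⟨b, rfl⟩
        exact h2 ⟨p b, by rw [hsq2, hb']⟩
      · rw [hε2 _ (by rw [hb']; exact h2)]
        exact hb'
end

section
/- (Strong Snake Lemma for pointed sets.) Let a : A → B and p : B → C be pointed maps with a injective away from the basepoint (not necessarily injective), p surjective and injective away from the basepoint, and a(A) = p⁻¹(∗) (exactness at B). Let i' : A' → B' and b' : B' → C' be pointed maps with i' injective, b' injective away from the basepoint (not necessarily surjective), and i'(A') = b'⁻¹(∗) (exactness at B'). Let f : A → A', g : B → B', h : C → C' be pointed maps, each injective away from the basepoint, with g ∘ a = i' ∘ f and h ∘ p = b' ∘ g. Then: a restricts to a map ker f → ker g, p restricts to a map ker g → ker h, i' induces a map coker f → coker g (sending a' to i'(a') if i'(a') ∉ g(B), else to ∗), b' induces a map coker g → coker h (sending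 b'' to b'(b'') if b'(b'') ∉ h(C), else to ∗), and there exists a pointed map δ : ker h → coker f such that all six maps are injective away from the basepoint and the six-term sequence ker f → ker g → ker h →^δ coker f → coker g → coker h is exact at ker g, ker h, coker f and coker g. -/
open Classical in
/-- **Strong Snake Lemma for pointed sets.** Pointed sets are modeled as types with a
chosen basepoint. Given pointed maps `a : A → B` (injective away from the basepoint) and
`p : B → C` (surjective, injective away from the basepoint) with `a(A) = p⁻¹(∗)`, pointed
maps `i' : A' → B'` (injective) and `b' : B' → C'` (injective away from the basepoint)
with `i'(A') = b'⁻¹(∗)`, and pointed maps `f, g, h` injective away from the basepoint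
making both squares commute, there is a six-term sequence
`ker f → ker g → ker h → coker f → coker g → coker h` whose maps are all injective away
from the basepoint and which is exact at `ker g`, `ker h`, `coker f` and `coker g`. -/
theorem stmt5 {A B C A' B' C' : Type}
    (a0 : A) (b0 : B) (c0 : C) (a0' : A') (b0' : B') (c0' : C')
    (a : A → B) (p : B → C) (i' : A' → B') (b' : B' → C')
    (f : A → A') (g : B → B') (h : C → C')
    (ha0 : a a0 = b0) (hp0 : p b0 = c0) (hi0' : i' a0' = b0') (hb0' : b' b0' = c0')
    (hf0 : f a0 = a0') (hg0 : g b0 = b0') (hh0 : h c0 = c0')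
    (ha_inj : ∀ x y : A, a x = a y → a x ≠ b0 → x = y)
    (hp_surj : Function.Surjective p)
    (hp_inj : ∀ x y : B, p x = p y → p x ≠ c0 → x = y)
    (hex : ∀ b : B, p b = c0 ↔ b ∈ Set.range a)
    (hi'_inj : Function.Injective i')
    (hb'_inj : ∀ x y : B', b' x = b' y → b' x ≠ c0' → x = y)
    (hex' : ∀ x : B', b' x = c0' ↔ x ∈ Set.range i')
    (hf_inj : ∀ x y : A, f x = f y → f x ≠ a0' → x = y)
    (hg_inj : ∀ x y : B, g x = g y → g x ≠ b0' → x = y)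
    (hh_inj : ∀ x y : C, h x = h y → h x ≠ c0' → x = y)
    (hsq1 : ∀ x : A, g (a x) = i' (f x))
    (hsq2 : ∀ x : B, h (p x) = b' (g x)) :
    -- kernels and cokernels, as pointed sets
    let Kf : Type := {x : A // f x = a0'}
    let Kg : Type := {x : B // g x = b0'}
    let Kh : Type := {x : C // h x = c0'}
    let Qf : Type := {x : A' // x = a0' ∨ x ∉ Set.range f}
    let Qg : Type := {x : B' // x = b0' ∨ x ∉ Set.range g}
    let Qh : Type := {x : C' // x = c0' ∨ x ∉ Set.range h}
    -- the restriction of a to kernels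
    let α : Kf → Kg := fun x => ⟨a x.1, by rw [hsq1, x.2, hi0']⟩
    -- the restriction of p to kernels
    let β : Kg → Kh := fun x => ⟨p x.1, by rw [hsq2, x.2, hb0']⟩
    -- the map induced by i' on cokernels
    let γ : Qf → Qg := fun x =>
      if hx : i' x.1 ∈ Set.range g then ⟨b0', Or.inl rfl⟩ else ⟨i' x.1, Or.inr hx⟩
    -- the map induced by b' on cokernels
    let ε : Qg → Qh := fun x =>
      if hx : b' x.1 ∈ Set.range h then ⟨c0', Or.inl rfl⟩ else ⟨b' x.1, Or.inr hx⟩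
    ∃ δ : Kh → Qf,
      -- δ is pointed
      δ ⟨c0, hh0⟩ = ⟨a0', Or.inl rfl⟩ ∧
      -- all maps in the sequence are injective away from the basepoint
      (∀ x y : Kf, α x = α y → α x ≠ (⟨b0, hg0⟩ : Kg) → x = y) ∧
      (∀ x y : Kg, β x = β y → β x ≠ (⟨c0, hh0⟩ : Kh) → x = y) ∧
      (∀ x y : Kh, δ x = δ y → δ x ≠ (⟨a0', Or.inl rfl⟩ : Qf) → x = y) ∧
      (∀ x y : Qf, γ x = γ y → γ x ≠ (⟨b0', Or.inl rfl⟩ : Qg) → x = y) ∧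
      (∀ x y : Qg, ε x = ε y → ε x ≠ (⟨c0', Or.inl rfl⟩ : Qh) → x = y) ∧
      -- exactness at ker g, ker h, coker f, coker g
      (∀ t : Kg, β t = (⟨c0, hh0⟩ : Kh) ↔ t ∈ Set.range α) ∧
      (∀ t : Kh, δ t = (⟨a0', Or.inl rfl⟩ : Qf) ↔ t ∈ Set.range β) ∧
      (∀ t : Qf, γ t = (⟨b0', Or.inl rfl⟩ : Qg) ↔ t ∈ Set.range δ) ∧
      (∀ t : Qg, ε t = (⟨c0', Or.inl rfl⟩ : Qh) ↔ t ∈ Set.range γ) := by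
  intro Kf Kg Kh Qf Qg Qh α β γ ε
  have hδ : ∀ c : Kh, ∃ q : Qf, (c.1 = c0 ∧ q.1 = a0') ∨
      (c.1 ≠ c0 ∧ ∃ b, p b = c.1 ∧ g b = i' q.1) := by
    rintro ⟨c, hc⟩
    by_cases h0 : c = c0
    · exact ⟨⟨a0', Or.inl rfl⟩, Or.inl ⟨h0, rfl⟩⟩
    · obtain ⟨b, rfl⟩ := hp_surj c
      obtain ⟨q, hq⟩ := (hex' (g b)).1 (by rw [← hsq2, hc])
      refine ⟨⟨q, ?_⟩, Or.inr ⟨h0, b, rfl, hq.symm⟩⟩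
      by_contra hn
      push Not at hn
      obtain ⟨hn, x, rfl⟩ := hn
      apply h0
      rw [hex]
      refine ⟨x, hg_inj _ _ (by rw [hsq1, hq]) ?_⟩
      rw [hsq1, ← hi0']
      exact fun e => hn (hi'_inj e)
  choose δ hδ using hδ
  have gγ : ∀ t : Qf, (i' t.1 ∈ Set.range g ∧ (γ t).1 = b0') ∨
      (i' t.1 ∉ Set.range g ∧ (γ t).1 = i' t.1) := by
    intro t
    by_cases hx : i' t.1 ∈ Set.range g
    · exact Or.inl ⟨hx, by simp only [γ, dif_pos hx]⟩
    · exact Or.inr ⟨hx, by simp only [γ, dif_neg hx]⟩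
  have gε : ∀ t : Qg, (b' t.1 ∈ Set.range h ∧ (ε t).1 = c0') ∨
      (b' t.1 ∉ Set.range h ∧ (ε t).1 = b' t.1) := by
    intro t
    by_cases hx : b' t.1 ∈ Set.range h
    · exact Or.inl ⟨hx, by simp only [ε, dif_pos hx]⟩
    · exact Or.inr ⟨hx, by simp only [ε, dif_neg hx]⟩
  have hδ0 : ∀ c : Kh, c.1 = c0 → (δ c).1 = a0' := by
    intro c hc
    rcases hδ c with h1 | h1
    · exact h1.2
    · exact absurd hc h1.1
  refine ⟨δ, Subtype.ext (hδ0 _ rfl), ?_, ?_, ?_, ?_, ?_, ?_, ?_, ?_, ?_⟩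
  · intro x y e n
    exact Subtype.ext (ha_inj _ _ (congrArg Subtype.val e) fun e => n (Subtype.ext e))
  · intro x y e n
    exact Subtype.ext (hp_inj _ _ (congrArg Subtype.val e) fun e => n (Subtype.ext e))
  · intro x y e n
    have n' : (δ x).1 ≠ a0' := fun e => n (Subtype.ext e)
    have e' : (δ x).1 = (δ y).1 := congrArg Subtype.val e
    rcases hδ x with h1 | ⟨-, b, hb, hb2⟩
    · exact absurd h1.2 n'
    rcases hδ y with h1 | ⟨-, d, hd, hd2⟩
    · exact absurd (e'.trans h1.2) n'
    have : b = d := hg_inj _ _ (by rw [hb2, hd2, e']) (by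
      rw [hb2, ← hi0']
      exact fun e => n' (hi'_inj e))
    exact Subtype.ext (by rw [← hb, ← hd, this])
  · intro x y e n
    have n' : (γ x).1 ≠ b0' := fun e => n (Subtype.ext e)
    have e' : (γ x).1 = (γ y).1 := congrArg Subtype.val e
    rcases gγ x with h1 | h1
    · exact absurd h1.2 n'
    rcases gγ y with h2 | h2
    · exact absurd (e'.trans h2.2) n'
    exact Subtype.ext (hi'_inj (by rw [← h1.2, ← h2.2, e']))
  · intro x y e n
    have n' : (ε x).1 ≠ c0' := fun e => n (Subtype.ext e)
    have e' : (ε x).1 = (ε y).1 := congrArg Subtype.val e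
    rcases gε x with h1 | h1
    · exact absurd h1.2 n'
    rcases gε y with h2 | h2
    · exact absurd (e'.trans h2.2) n'
    exact Subtype.ext (hb'_inj _ _ (by rw [← h1.2, ← h2.2, e']) (by rw [← h1.2]; exact n'))
  · intro t
    constructor
    · intro e
      obtain ⟨x, hx⟩ := (hex t.1).1 (congrArg Subtype.val e)
      exact ⟨⟨x, hi'_inj (by rw [← hsq1, hx, t.2, hi0'])⟩, Subtype.ext hx⟩
    · rintro ⟨x, rfl⟩
      exact Subtype.ext ((hex _).2 ⟨x.1, rfl⟩)
  · intro t
    constructor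
    · intro e
      have e' : (δ t).1 = a0' := congrArg Subtype.val e
      rcases hδ t with h1 | ⟨-, b, hb, hb2⟩
      · exact ⟨⟨b0, hg0⟩, Subtype.ext (hp0.trans h1.1.symm)⟩
      · exact ⟨⟨b, by rw [hb2, e', hi0']⟩, Subtype.ext hb⟩
    · rintro ⟨x, rfl⟩
      apply Subtype.ext
      rcases hδ (β x) with h1 | ⟨n, b, hb, hb2⟩
      · exact h1.2
      · have : b = x.1 := hp_inj _ _ hb (by rw [hb]; exact n)
        exact hi'_inj (by rw [← hb2, this, x.2, hi0'])
  · intro t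
    constructor
    · intro e
      have e' : (γ t).1 = b0' := congrArg Subtype.val e
      have hr : i' t.1 ∈ Set.range g := by
        rcases gγ t with h1 | h1
        · exact h1.1
        · exact ⟨b0, by rw [hg0, ← h1.2, e']⟩
      obtain ⟨b, hb⟩ := hr
      by_cases hp : p b = c0
      · obtain ⟨x, rfl⟩ := (hex b).1 hp
        have hx : f x = t.1 := hi'_inj (by rw [← hsq1, hb])
        refine ⟨⟨c0, hh0⟩, Subtype.ext ?_⟩
        rw [hδ0 _ rfl]
        rcases t.2 with h1 | h1
        · exact h1.symm
        · exact absurd ⟨x, hx⟩ h1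
      · refine ⟨⟨p b, by rw [hsq2, hb]; exact (hex' _).2 ⟨_, rfl⟩⟩, Subtype.ext ?_⟩
        rcases hδ ⟨p b, by rw [hsq2, hb]; exact (hex' _).2 ⟨_, rfl⟩⟩ with h1 | ⟨n, d, hd, hd2⟩
        · exact absurd h1.1 hp
        · have : d = b := hp_inj _ _ hd (by rw [hd]; exact n)
          exact hi'_inj (by rw [← hd2, this, hb])
    · rintro ⟨x, rfl⟩
      apply Subtype.ext
      rcases gγ (δ x) with h1 | h1
      · exact h1.2
      · exfalso
        apply h1.1
        rcases hδ x with h2 | ⟨n, b, hb, hb2⟩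
        · exact ⟨b0, by rw [hg0, h2.2, hi0']⟩
        · exact ⟨b, hb2⟩
  · intro t
    constructor
    · intro e
      have e' : (ε t).1 = c0' := congrArg Subtype.val e
      have ht : b' t.1 = c0' := by
        rcases gε t with ⟨⟨c, hc⟩, -⟩ | h1
        · by_contra hn
          obtain ⟨b, rfl⟩ := hp_surj c
          have : t.1 = g b := hb'_inj _ _ (by rw [← hc, hsq2]) hn
          rcases t.2 with h2 | h2
          · exact hn (by rw [h2, hb0'])
          · exact h2 ⟨b, this.symm⟩
        · exact h1.2.symm.trans e'
      obtain ⟨q, hq⟩ := (hex' _).1 ht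
      by_cases h0 : t.1 = b0'
      · refine ⟨⟨a0', Or.inl rfl⟩, Subtype.ext ?_⟩
        rcases gγ ⟨a0', Or.inl rfl⟩ with h1 | h1
        · exact h1.2.trans h0.symm
        · rw [h1.2, h0, ← hi0']
      · have hr : t.1 ∉ Set.range g := t.2.resolve_left h0
        refine ⟨⟨q, Or.inr ?_⟩, Subtype.ext ?_⟩
        · rintro ⟨x, rfl⟩
          exact hr ⟨a x, by rw [hsq1, hq]⟩
        · simp only [γ]
          rw [dif_neg (by rw [hq]; exact hr)]
          exact hq
    · rintro ⟨x, rfl⟩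
      apply Subtype.ext
      rcases gε (γ x) with h1 | h1
      · exact h1.2
      · rw [h1.2]
        rcases gγ x with h2 | h2
        · rw [h2.2, hb0']
        · rw [h2.2]; exact (hex' _).2 ⟨_, rfl⟩
end

section
/- (Explicit set-theoretic form of the weak snake lemma.) Let B and B' be sets, A ⊆ B with complement C = B \ A, A' ⊆ B' with complement C' = B' \ A', Y ⊆ B, and j : Y → B' an injective function. Define X = Y ∩ A, Z = {y ∈ Y : j(y) ∈ C'}, and W = (C ∩ Y) \ Z, and assume Z ⊆ C. Then: (i) B \ Y is the disjoint union of A \ X and C \ Y; (ii) C \ Z is the disjoint union of C \ Y and W; (iii) j restricts to an injection on W with image (A' ∩ j(Y)) \ j(X), and A' \ j(X) is the disjoint union of j(W) and A' \ j(Y); (iv) B' \ j(Y) is the disjoint union of A' \ j(Y) and C' \ j(Z). In other words, the six-term sequence A \ X → B \ Y → C \ Z → A' \ j(X) → B' \ j(Y) → C' \ j(Z) is an exact sequence of sets, with transition sets A \ X, C \ Y, W, A' \ j(Y), C' \ j(Z). -/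
/-- **Explicit set-theoretic form of the weak snake lemma.** Given `A ⊆ B` with
complement `C = B \ A`, `A' ⊆ B'` with complement `C' = B' \ A'`, a subset `Y ⊆ B` and an
injection `j : Y → B'`, set `X = Y ∩ A`, `Z = {y ∈ Y : j y ∈ C'}` and `W = (C ∩ Y) \ Z`,
and assume `Z ⊆ C`. Then:
(i) `B \ Y` is the disjoint union of `A \ X` and `C \ Y`;
(ii) `C \ Z` is the disjoint union of `C \ Y` and `W`;
(iii) `j` restricts to an injection on `W` with image `(A' ∩ j(Y)) \ j(X)`, and
`A' \ j(X)` is the disjoint union of `j(W)` and `A' \ j(Y)`;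
(iv) `B' \ j(Y)` is the disjoint union of `A' \ j(Y)` and `C' \ j(Z)`.
That is, `A \ X → B \ Y → C \ Z → A' \ j(X) → B' \ j(Y) → C' \ j(Z)` is an exact
sequence of sets with transition sets `A \ X, C \ Y, W, A' \ j(Y), C' \ j(Z)`. -/
theorem stmt6 {B B' : Type} (A : Set B) (A' : Set B') (Y : Set B)
    (j : Y → B') (hj : Function.Injective j) :
    let C : Set B := Aᶜ
    let C' : Set B' := A'ᶜ
    let X : Set B := Y ∩ A
    let Z : Set B := {b | ∃ h : b ∈ Y, j ⟨b, h⟩ ∈ C'}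
    let W : Set B := (C ∩ Y) \ Z
    -- the image under `j` of a subset of `B`
    let jim : Set B → Set B' := fun S => {b' | ∃ y : Y, ↑y ∈ S ∧ j y = b'}
    Z ⊆ C →
    -- (i)
    ((Yᶜ = (A \ X) ∪ (C \ Y) ∧ Disjoint (A \ X) (C \ Y)) ∧
    -- (ii)
    (C \ Z = (C \ Y) ∪ W ∧ Disjoint (C \ Y) W) ∧
    -- (iii)
    ((∀ y₁ y₂ : Y, ↑y₁ ∈ W → ↑y₂ ∈ W → j y₁ = j y₂ → y₁ = y₂) ∧
      jim W = (A' ∩ jim Y) \ jim X ∧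
      (A' \ jim X = jim W ∪ (A' \ jim Y) ∧ Disjoint (jim W) (A' \ jim Y))) ∧
    -- (iv)
    ((jim Y)ᶜ = (A' \ jim Y) ∪ (C' \ jim Z) ∧
      Disjoint (A' \ jim Y) (C' \ jim Z))) := by
  intro C C' X Z W jim hZ
  have mC : ∀ b, b ∈ C ↔ b ∉ A := fun _ => Iff.rfl
  have mC' : ∀ b, b ∈ C' ↔ b ∉ A' := fun _ => Iff.rfl
  have mX : ∀ b, b ∈ X ↔ b ∈ Y ∧ b ∈ A := fun _ => Iff.rfl
  have mZ : ∀ y : Y, (y : B) ∈ Z ↔ j y ∉ A' :=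
    fun y => ⟨fun ⟨_, h⟩ => h, fun h => ⟨y.2, h⟩⟩
  have mZY : ∀ b, b ∈ Z → b ∈ Y := fun _ h => h.1
  have mW : ∀ b, b ∈ W ↔ (b ∉ A ∧ b ∈ Y) ∧ b ∉ Z := fun _ => Iff.rfl
  have mj : ∀ S b, b ∈ jim S ↔ ∃ y : Y, (y : B) ∈ S ∧ j y = b := fun _ _ => Iff.rfl
  have mjj : ∀ S (y : Y), j y ∈ jim S ↔ (y : B) ∈ S := fun S y =>
    ⟨fun ⟨z, hz, e⟩ => hj e ▸ hz, fun h => ⟨y, h, rfl⟩⟩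
  have sub : ∀ S b, b ∈ jim S → b ∈ jim Y := fun S b ⟨y, _, e⟩ => ⟨y, y.2, e⟩
  have hZA : ∀ b, b ∈ Z → b ∉ A := fun b h => hZ h
  -- a point of `B'` is either outside `j(Y)` or of the form `j y`
  have key : ∀ b, (∃ y : Y, j y = b) ∨ b ∉ jim Y := by
    intro b
    by_cases h : b ∈ jim Y
    · obtain ⟨y, _, e⟩ := h
      exact Or.inl ⟨y, e⟩
    · exact Or.inr h
  clear_value C C' X Z W jim
  refine ⟨⟨?_, ?_⟩, ⟨?_, ?_⟩, ⟨fun _ _ _ _ h => hj h, ?_, ?_, ?_⟩, ?_, ?_⟩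
  · ext b
    simp only [Set.mem_compl_iff, Set.mem_union, Set.mem_diff, mC, mX]
    tauto
  · rw [Set.disjoint_left]
    intro b h h'
    exact (mC b).1 h'.1 h.1
  · ext b
    have := mZY b
    simp only [Set.mem_union, Set.mem_diff, mC, mW]
    tauto
  · rw [Set.disjoint_left]
    intro b h h'
    exact h.2 ((mW b).1 h').1.2
  · ext b
    rcases key b with ⟨y, rfl⟩ | h
    · have := mZ y
      have := y.2
      simp only [Set.mem_inter_iff, Set.mem_diff, mjj, mW, mX]
      tauto
    · have := sub W b
      simp only [Set.mem_inter_iff, Set.mem_diff]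
      tauto
  · ext b
    rcases key b with ⟨y, rfl⟩ | h
    · have := mZ y
      have := y.2
      simp only [Set.mem_union, Set.mem_diff, mjj, mW, mX]
      tauto
    · have := sub W b
      have := sub X b
      simp only [Set.mem_union, Set.mem_diff]
      tauto
  · rw [Set.disjoint_left]
    intro b h h'
    exact h'.2 (sub W b h)
  · ext b
    rcases key b with ⟨y, rfl⟩ | h
    · have := mZ y
      have := y.2
      simp only [Set.mem_compl_iff, Set.mem_union, Set.mem_diff, mjj, mC']
      tauto
    · have := sub Z b
      simp only [Set.mem_compl_iff, Set.mem_union, Set.mem_diff, mC']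
      tauto
  · rw [Set.disjoint_left]
    intro b h h'
    exact (mC' b).1 h'.1 h.1
end

section
/- (Long exact sequence in homology.) Let X, Y, Z be chain complexes of pointed sets, f : X → Y a chain map with each fₙ injective, and g : Y → Z a chain map with each gₙ surjective and injective away from the basepoint, such that gₙ⁻¹(∗) = fₙ(Xₙ) for all n (a short exact sequence of chain complexes). Then there exist pointed maps δₙ : Hₙ(Z) → Hₙ₋₁(X), injective away from the basepoint, such that the sequence ⋯ → Hₙ₊₁(Z) →^{δₙ₊₁} Hₙ(X) →^{Hₙ(f)} Hₙ(Y) →^{Hₙ(g)} Hₙ(Z) →^{δₙ} Hₙ₋₁(X) → ⋯ is exact at every term, where Hₙ(f) and Hₙ(g) are the induced maps on homology. -/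
def DD (C : PreCC) (n : ℤ) (z : C.X (n + 1)) : C.X n :=
  C.castX (show n + 1 - 1 = n by omega) (C.d (n + 1) z)

theorem castX_pt (C : PreCC) {m n : ℤ} (h : m = n) : C.castX h (C.pt m) = C.pt n := by
  subst h; rfl

theorem castX_inj (C : PreCC) {m n : ℤ} (h : m = n) (a b : C.X m)
    (e : C.castX h a = C.castX h b) : a = b := by
  subst h; exact e

theorem castX_map (C D : PreCC) (f : ∀ n, C.X n → D.X n) {m n : ℤ} (h : m = n) (a : C.X m) :
    f n (C.castX h a) = D.castX h (f m a) := by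
  subst h; rfl

theorem castX_d (C : PreCC) {m n : ℤ} (h : m = n) (a : C.X m)
    (e : C.d m a = C.pt (m - 1)) : C.d n (C.castX h a) = C.pt (n - 1) := by
  subst h; exact e

theorem DD_pt_iff (C : PreCC) (n : ℤ) (z : C.X (n + 1)) :
    DD C n z = C.pt n ↔ C.d (n + 1) z = C.pt (n + 1 - 1) := by
  constructor
  · intro h
    apply castX_inj C (show n + 1 - 1 = n by omega)
    rw [castX_pt]; exact h
  · intro h
    unfold DD
    rw [h, castX_pt]

theorem DD_pt (C : PreCC) (hC : C.IsComplex) (n : ℤ) : DD C n (C.pt (n + 1)) = C.pt n :=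
  (DD_pt_iff C n _).2 (hC.1 _)

theorem DD_inj (C : PreCC) (hC : C.IsComplex) (n : ℤ) (a b : C.X (n + 1))
    (h : DD C n a = DD C n b) (h' : DD C n a ≠ C.pt n) : a = b :=
  hC.2.1 _ a b (castX_inj C _ _ _ h) (fun e => h' ((DD_pt_iff C n a).2 e))

theorem d_DD (C : PreCC) (hC : C.IsComplex) (n : ℤ) (a : C.X (n + 1)) :
    C.d n (DD C n a) = C.pt (n - 1) :=
  castX_d C _ _ (hC.2.2 _ a)

theorem DD_map (C D : PreCC) (f : ∀ n, C.X n → D.X n) (hf : IsChainMap C D f) (n : ℤ)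
    (a : C.X (n + 1)) : f n (DD C n a) = DD D n (f (n + 1) a) := by
  unfold DD
  rw [castX_map C D f, hf.2.2]

theorem Hmem_cyc (C : PreCC) (hC : C.IsComplex) (n : ℤ) (x : C.X n) (h : Hmem C n x) :
    C.d n x = C.pt (n - 1) := by
  rcases h with h | h
  · rw [h, hC.1]
  · exact h.2.1

theorem Hmem_bdry (C : PreCC) (n : ℤ) (z : C.X (n + 1)) (h : Hmem C n (DD C n z)) :
    DD C n z = C.pt n := by
  rcases h with h | h
  · exact h
  · exact absurd rfl (h.2.2 z)

theorem Hmem_of (C : PreCC) (n : ℤ) (x : C.X n) (h : C.d n x = C.pt (n - 1))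
    (h' : ∀ z, DD C n z = x → x = C.pt n) : Hmem C n x := by
  by_cases e : x = C.pt n
  · exact Or.inl e
  · exact Or.inr ⟨e, h, fun z hz => e (h' z hz)⟩

theorem map_cyc (C D : PreCC) (f : ∀ n, C.X n → D.X n) (hf : IsChainMap C D f) (n : ℤ)
    (a : C.X n) (h : C.d n a = C.pt (n - 1)) : D.d n (f n a) = D.pt (n - 1) := by
  rw [← hf.2.2, h, hf.1]

theorem Hmap_pos (C D : PreCC) (f : ∀ n, C.X n → D.X n) (n : ℤ) (t : HT C n)
    (h : Hmem D n (f n t.1)) : Hmap C D f n t = ⟨f n t.1, h⟩ := dif_pos h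

theorem Hmap_neg (C D : PreCC) (f : ∀ n, C.X n → D.X n) (n : ℤ) (t : HT C n)
    (h : ¬ Hmem D n (f n t.1)) : Hmap C D f n t = Hpt D n := dif_neg h

theorem Hmap_pt_iff (C D : PreCC) (hC : C.IsComplex) (hD : D.IsComplex)
    (f : ∀ n, C.X n → D.X n) (hf : IsChainMap C D f)
    (n : ℤ) (t : HT C n) : Hmap C D f n t = Hpt D n ↔ ∃ y, DD D n y = f n t.1 := by
  by_cases h : Hmem D n (f n t.1)
  · rw [Hmap_pos C D f n t h]
    constructor
    · intro e
      exact ⟨D.pt _, by rw [DD_pt D hD]; exact (congrArg Subtype.val e).symm⟩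
    · rintro ⟨y, hy⟩
      apply Subtype.ext
      change f n t.1 = D.pt n
      rw [← hy] at h ⊢
      exact Hmem_bdry D n y h
  · refine ⟨fun _ => ?_, fun _ => Hmap_neg C D f n t h⟩
    by_contra hh
    exact h (Hmem_of D n _ (map_cyc C D f hf n _ (Hmem_cyc C hC n _ t.2))
      (fun z hz => absurd ⟨z, hz⟩ hh))

theorem Hmap_eq (C D : PreCC) (f : ∀ n, C.X n → D.X n)
    (n : ℤ) (t : HT C n) (s : HT D n) (h : f n t.1 = s.1) : Hmap C D f n t = s := by
  have h2 : Hmem D n (f n t.1) := h ▸ s.2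
  exact (Hmap_pos C D f n t h2).trans (Subtype.ext h)

theorem Hmap_val (C D : PreCC) (f : ∀ n, C.X n → D.X n)
    (n : ℤ) (t : HT C n) : Hmap C D f n t = Hpt D n ∨ (Hmap C D f n t).1 = f n t.1 := by
  by_cases h : Hmem D n (f n t.1)
  · exact Or.inr (congrArg Subtype.val (Hmap_pos C D f n t h))
  · exact Or.inl (Hmap_neg C D f n t h)

/-- **Long exact sequence in homology.** Given a short exact sequence of chain complexes
of pointed sets `X →f Y →g Z` (each `fₙ` injective, each `gₙ` surjective and injective
away from the basepoint, and `gₙ⁻¹(∗) = fₙ(Xₙ)`), there are connecting pointed maps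
`δₙ : Hₙ₊₁(Z) → Hₙ(X)`, injective away from the basepoint, making the sequence
`⋯ → Hₙ₊₁(Z) → Hₙ(X) → Hₙ(Y) → Hₙ(Z) → Hₙ₋₁(X) → ⋯` exact at every term. -/
theorem stmt7 (X Y Z : PreCC) (hX : X.IsComplex) (hY : Y.IsComplex) (hZ : Z.IsComplex)
    (f : ∀ n, X.X n → Y.X n) (hf : IsChainMap X Y f)
    (hfinj : ∀ n, Function.Injective (f n))
    (g : ∀ n, Y.X n → Z.X n) (hg : IsChainMap Y Z g)
    (hgsurj : ∀ n, Function.Surjective (g n))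
    (hexact : ∀ n, ∀ y : Y.X n, g n y = Z.pt n ↔ y ∈ Set.range (f n)) :
    ∃ δ : ∀ n : ℤ, HT Z (n + 1) → HT X n,
      -- each δₙ is pointed
      (∀ n, δ n (Hpt Z (n + 1)) = Hpt X n) ∧
      -- each δₙ is injective away from the basepoint
      (∀ n, ∀ a b : HT Z (n + 1), δ n a = δ n b → δ n a ≠ Hpt X n → a = b) ∧
      -- exactness at Hₙ(Y)
      (∀ n, ∀ t : HT Y n, Hmap Y Z g n t = Hpt Z n ↔ t ∈ Set.range (Hmap X Y f n)) ∧
      -- exactness at Hₙ₊₁(Z)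
      (∀ n, ∀ t : HT Z (n + 1), δ n t = Hpt X n ↔ t ∈ Set.range (Hmap Y Z g (n + 1))) ∧
      -- exactness at Hₙ(X)
      (∀ n, ∀ t : HT X n, Hmap X Y f n t = Hpt Y n ↔ t ∈ Set.range (δ n)) := by
  have hδ : ∀ n (z : HT Z (n + 1)), ∃ x : HT X n, (z = Hpt Z (n + 1) → x = Hpt X n) ∧
      (z ≠ Hpt Z (n + 1) → ∃ y, g (n + 1) y = z.1 ∧ DD Y n y = f n x.1) := by
    intro n z
    by_cases hz : z = Hpt Z (n + 1)
    · exact ⟨Hpt X n, fun _ => rfl, fun h => absurd hz h⟩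
    obtain ⟨y, hy⟩ := hgsurj (n + 1) z.1
    have hz1 : z.1 ≠ Z.pt (n + 1) := fun e => hz (Subtype.ext e)
    have h1 : g n (DD Y n y) = Z.pt n := by
      rw [DD_map Y Z g hg, hy, DD_pt_iff]
      exact Hmem_cyc Z hZ _ _ z.2
    obtain ⟨x, hx⟩ := (hexact n _).1 h1
    refine ⟨⟨x, Hmem_of X n x ?_ ?_⟩, fun h => absurd h hz, fun _ => ⟨y, hy, hx.symm⟩⟩
    · apply hfinj
      rw [hf.2.2, hx, d_DD Y hY, hf.1]
    · intro w hw
      by_contra hne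
      have h2 : DD Y n (f (n + 1) w) = DD Y n y := by
        rw [← DD_map X Y f hf, hw, hx]
      have h3 : DD Y n (f (n + 1) w) ≠ Y.pt n := by
        rw [h2, ← hx]
        intro e
        exact hne (hfinj n (by rw [e, hf.1]))
      have h4 := DD_inj Y hY n _ _ h2 h3
      exact hz1 (by rw [← hy]; exact (hexact _ _).2 ⟨w, h4⟩)
  choose δ hδ0 hδ1 using hδ
  have fpt : ∀ n (x : X.X n), f n x = Y.pt n → x = X.pt n := fun n x h =>
    hfinj n (by rw [h, hf.1])
  refine ⟨δ, fun n => hδ0 n _ rfl, ?_, ?_, ?_, ?_⟩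
  · intro n a b hab hne
    have ha : a ≠ Hpt Z (n + 1) := fun e => hne (hδ0 n a e)
    have hb : b ≠ Hpt Z (n + 1) := fun e => hne (hab.trans (hδ0 n b e))
    obtain ⟨y, hy, hy'⟩ := hδ1 n a ha
    obtain ⟨w, hw, hw'⟩ := hδ1 n b hb
    have : y = w := by
      apply DD_inj Y hY n
      · rw [hy', hw', hab]
      · rw [hy']
        exact fun e => hne (Subtype.ext (fpt n _ e))
    subst this
    exact Subtype.ext (hy.symm.trans hw)
  · intro n t
    rw [Hmap_pt_iff Y Z hY hZ g hg]
    constructor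
    · rintro ⟨z, hz⟩
      have key : g n t.1 = Z.pt n := by
        by_contra hne
        obtain ⟨y, rfl⟩ := hgsurj _ z
        rw [← DD_map Y Z g hg] at hz
        have h1 := hg.2.1 n _ _ hz (by rw [hz]; exact hne)
        have h2 := t.2
        rw [← h1] at h2
        have h3 := Hmem_bdry Y n y h2
        rw [h1] at h3
        exact hne (by rw [h3, hg.1])
      obtain ⟨x, hx⟩ := (hexact n _).1 key
      have hxm : Hmem X n x := by
        apply Hmem_of
        · apply hfinj
          rw [hf.2.2, hx, hf.1]
          exact Hmem_cyc Y hY n _ t.2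
        · intro w hw
          apply fpt
          have h2 := t.2
          rw [← hx, ← hw, DD_map X Y f hf] at h2
          rw [← hw, DD_map X Y f hf]
          exact Hmem_bdry Y n _ h2
      exact ⟨⟨x, hxm⟩, Hmap_eq X Y f n _ _ hx⟩
    · rintro ⟨x, rfl⟩
      refine ⟨Z.pt _, ?_⟩
      rw [DD_pt Z hZ]
      rcases Hmap_val X Y f n x with h | h
      · rw [h]; exact (hg.1 n).symm
      · rw [h]; exact ((hexact n _).2 ⟨_, rfl⟩).symm
  · intro n t
    constructor
    · intro h
      by_cases ht : t = Hpt Z (n + 1)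
      · exact ⟨Hpt Y _, Hmap_eq Y Z g _ _ _ (by rw [ht]; exact hg.1 _)⟩
      obtain ⟨y, hy, hy'⟩ := hδ1 n t ht
      have hym : Hmem Y (n + 1) y := by
        apply Hmem_of
        · rw [← DD_pt_iff, hy', h]
          exact hf.1 n
        · intro w hw
          exfalso
          have h2 := t.2
          rw [← hy, ← hw, DD_map Y Z g hg] at h2
          have h3 := Hmem_bdry Z _ _ h2
          rw [← DD_map Y Z g hg, hw, hy] at h3
          exact ht (Subtype.ext h3)
      exact ⟨⟨y, hym⟩, Hmap_eq Y Z g _ _ _ hy⟩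
    · rintro ⟨y, rfl⟩
      by_cases ht : Hmap Y Z g (n + 1) y = Hpt Z (n + 1)
      · exact hδ0 n _ ht
      obtain ⟨w, hw, hw'⟩ := hδ1 n _ ht
      have hv := (Hmap_val Y Z g (n + 1) y).resolve_left ht
      have : w = y.1 := by
        apply hg.2.1 _ _ _ (hw.trans hv)
        rw [hw]
        exact fun e => ht (Subtype.ext e)
      subst this
      apply Subtype.ext
      apply fpt
      rw [← hw', DD_pt_iff]
      exact Hmem_cyc Y hY _ _ y.2
  · intro n t
    rw [Hmap_pt_iff X Y hX hY f hf]
    constructor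
    · rintro ⟨y, hy⟩
      by_cases ht : t = Hpt X n
      · exact ⟨Hpt Z _, by rw [ht]; exact hδ0 n _ rfl⟩
      have ht1 : f n t.1 ≠ Y.pt n := fun e => ht (Subtype.ext (fpt n _ e))
      have hz : g (n + 1) y ≠ Z.pt (n + 1) := by
        intro e
        obtain ⟨x, rfl⟩ := (hexact _ _).1 e
        rw [← DD_map X Y f hf] at hy
        have h1 := hfinj n hy
        have h2 := t.2
        rw [← h1] at h2
        have h3 := Hmem_bdry X n _ h2
        rw [h1] at h3
        exact ht (Subtype.ext h3)
      have hzm : Hmem Z (n + 1) (g (n + 1) y) := by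
        apply Hmem_of
        · rw [← DD_pt_iff, ← DD_map Y Z g hg, hy]
          exact (hexact _ _).2 ⟨_, rfl⟩
        · intro w hw
          exfalso
          obtain ⟨v, rfl⟩ := hgsurj _ w
          rw [← DD_map Y Z g hg] at hw
          have h1 := hg.2.1 _ _ _ hw (by rw [hw]; exact hz)
          apply ht1
          rw [← hy, DD_pt_iff, ← h1]
          exact d_DD Y hY _ _
      refine ⟨⟨_, hzm⟩, ?_⟩
      obtain ⟨w, hw, hw'⟩ := hδ1 n ⟨_, hzm⟩ (fun e => hz (congrArg Subtype.val e))
      have : w = y := hg.2.1 _ _ _ hw (by rw [hw]; exact hz)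
      subst this
      exact Subtype.ext (hfinj n (hw'.symm.trans hy))
    · rintro ⟨z, rfl⟩
      by_cases hz : z = Hpt Z (n + 1)
      · rw [hδ0 n z hz]
        exact ⟨Y.pt _, by rw [DD_pt Y hY]; exact (hf.1 n).symm⟩
      · obtain ⟨y, _, hy⟩ := hδ1 n z hz
        exact ⟨y, hy⟩
end

section
/- Let g : Y → Z be a chain map of chain complexes of pointed sets with each gₙ surjective and injective away from the basepoint. Define the kernel complex K by Kₙ = gₙ⁻¹(∗) with the restriction of the differentials of Y. Then K is a chain complex of pointed sets (the differentials of Y map Kₙ into Kₙ₋₁, are injective away from the basepoint, and consecutive differentials compose to the constant map at ∗), and g is a quasi-isomorphism if and only if K is exact. -/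
/-- Boundaries. -/
def Bd (C : PreCC) (n : ℤ) (x : C.X n) : Prop :=
  ∃ (m : ℤ) (h : m - 1 = n) (z : C.X m), C.castX h (C.d m z) = x

theorem bd_iff (C : PreCC) (n : ℤ) (x : C.X n) :
    Bd C n x ↔ ∃ z : C.X (n + 1), C.castX (show n + 1 - 1 = n by omega) (C.d (n + 1) z) = x := by
  constructor
  · rintro ⟨m, h, z, hz⟩
    obtain rfl : m = n + 1 := by omega
    exact ⟨z, hz⟩
  · rintro ⟨z, hz⟩
    exact ⟨n + 1, _, z, hz⟩

theorem hmem_iff (C : PreCC) (n : ℤ) (x : C.X n) :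
    Hmem C n x ↔ (x = C.pt n ∨ (x ≠ C.pt n ∧ C.d n x = C.pt (n - 1) ∧ ¬ Bd C n x)) := by
  unfold Hmem
  rw [bd_iff]
  simp only [not_exists, ne_eq]

theorem bd_d (C : PreCC) (m : ℤ) (z : C.X m) : Bd C (m - 1) (C.d m z) := ⟨m, rfl, z, rfl⟩

theorem bd_elim (C : PreCC) {P : ∀ n, C.X n → Prop} (h : ∀ m (z : C.X m), P (m - 1) (C.d m z))
    (n : ℤ) (x : C.X n) (hx : Bd C n x) : P n x := by
  obtain ⟨m, rfl, z, rfl⟩ := hx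
  exact h m z

theorem hmap_pos (C D : PreCC) (f : ∀ n, C.X n → D.X n) (n : ℤ) (x : HT C n)
    (h : Hmem D n (f n x.1)) : Hmap C D f n x = ⟨f n x.1, h⟩ := dif_pos h

theorem hmap_neg (C D : PreCC) (f : ∀ n, C.X n → D.X n) (n : ℤ) (x : HT C n)
    (h : ¬ Hmem D n (f n x.1)) : Hmap C D f n x = Hpt D n := dif_neg h

theorem bd_lift (Y Z : PreCC)
    (g : ∀ n, Y.X n → Z.X n) (hg : IsChainMap Y Z g)
    (hgsurj : ∀ n, Function.Surjective (g n)) (n : ℤ) (y : Y.X n) (hne : g n y ≠ Z.pt n)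
    (hb : Bd Z n (g n y)) : Bd Y n y := by
  obtain ⟨m, rfl, z, hz⟩ := hb
  obtain ⟨w, rfl⟩ := hgsurj m z
  have hz' : Z.d m (g m w) = g (m - 1) y := hz
  rw [← hg.2.2] at hz'
  have : Y.d m w = y := hg.2.1 _ _ _ hz' (hz' ▸ hne)
  exact this ▸ bd_d Y m w

theorem bd_map (Y Z : PreCC)
    (g : ∀ n, Y.X n → Z.X n) (hg : IsChainMap Y Z g) (n : ℤ) (y : Y.X n)
    (hb : Bd Y n y) : Bd Z n (g n y) := by
  obtain ⟨m, rfl, z, rfl⟩ := hb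
  change Bd Z (m - 1) (g (m - 1) (Y.d m z))
  rw [hg.2.2]
  exact bd_d Z m _

/-- For a levelwise surjective (and injective away from the basepoint) chain map
`g : Y → Z` of chain complexes of pointed sets, the kernel complex `K`, with
`Kₙ = gₙ⁻¹(∗)` and the restricted differentials of `Y`, is a chain complex of pointed
sets, and `g` is a quasi-isomorphism if and only if `K` is exact. -/
theorem stmt11 (Y Z : PreCC) (hY : Y.IsComplex) (hZ : Z.IsComplex)
    (g : ∀ n, Y.X n → Z.X n) (hg : IsChainMap Y Z g)
    (hgsurj : ∀ n, Function.Surjective (g n)) :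
    let K : PreCC :=
      ⟨fun n => {y : Y.X n // g n y = Z.pt n},
       fun n => ⟨Y.pt n, hg.1 n⟩,
       fun n y => ⟨Y.d n y.1, by rw [hg.2.2 n, y.2, hZ.1 n]⟩⟩
    K.IsComplex ∧ ((∀ n, Function.Bijective (Hmap Y Z g n)) ↔ K.Exact) := by
  intro K
  have hdpt := hg.2.2
  refine ⟨⟨fun n => Subtype.ext (hY.1 n), fun n a b h hne => ?_, fun n x => Subtype.ext (hY.2.2 n _)⟩, ?_, ?_⟩
  · exact Subtype.ext (hY.2.1 n _ _ (congrArg Subtype.val h) (fun h' => hne (Subtype.ext h')))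
  · intro hq n x hx
    rw [hmem_iff] at hx
    rcases hx with hx | ⟨hne, hd, hb⟩
    · exact hx
    exfalso
    have hne' : x.1 ≠ Y.pt n := fun h => hne (Subtype.ext h)
    have hd' : Y.d n x.1 = Y.pt (n - 1) := congrArg Subtype.val hd
    by_cases hbY : Bd Y n x.1
    · obtain ⟨m, rfl, y, hy⟩ := hbY
      have hy : Y.d m y = x.1 := hy
      have hgy : g m y ≠ Z.pt m := by
        intro h
        apply hb
        have : K.d m ⟨y, h⟩ = x := Subtype.ext hy
        exact this ▸ bd_d K m _
      have hz : Hmem Z m (g m y) := by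
        rw [hmem_iff]
        refine Or.inr ⟨hgy, ?_, fun hbz => ?_⟩
        · rw [← hg.2.2, hy, x.2]
        · have := bd_lift Y Z g hg hgsurj m y hgy hbz
          obtain ⟨k, rfl, w, rfl⟩ := this
          exact hne' (hy.symm.trans (hY.2.2 k w))
      obtain ⟨u, hu⟩ := (hq m).2 ⟨_, hz⟩
      have hu := congrArg Subtype.val hu
      by_cases hh : Hmem Z m (g m u.1)
      · rw [hmap_pos Y Z g m u hh] at hu
        have hu : g m u.1 = g m y := hu
        have huy : u.1 = y := hg.2.1 _ _ _ hu (hu ▸ hgy)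
        have hm := u.2
        rw [huy, hmem_iff] at hm
        rcases hm with hm | ⟨-, hm, -⟩
        · exact hgy (hm ▸ hg.1 m)
        · exact hne' (hy.symm.trans hm)
      · rw [hmap_neg Y Z g m u hh] at hu
        exact hgy hu.symm
    · have hm : Hmem Y n x.1 := (hmem_iff _ _ _).2 (Or.inr ⟨hne', hd', hbY⟩)
      have : Hmap Y Z g n ⟨x.1, hm⟩ = Hmap Y Z g n (Hpt Y n) := by
        have e1 := hmap_pos Y Z g n ⟨x.1, hm⟩ (Or.inl x.2)
        have e2 := hmap_pos Y Z g n (Hpt Y n) (Or.inl (hg.1 n))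
        exact e1.trans (Eq.trans (Subtype.ext (x.2.trans (hg.1 n).symm)) e2.symm)
      exact hne' (congrArg Subtype.val ((hq n).1 this))
  · intro hK n
    have key : ∀ m (y : Y.X m) (hy : g m y = Z.pt m), y ≠ Y.pt m → Y.d m y = Y.pt (m - 1) →
        Bd K m ⟨y, hy⟩ := by
      intro m y hy hne hd
      by_contra hb
      have := hK m ⟨y, hy⟩ ((hmem_iff _ _ _).2 (Or.inr
        ⟨fun h => hne (congrArg Subtype.val h), Subtype.ext hd, hb⟩))
      exact hne (congrArg Subtype.val this)
    have hKY : ∀ m (k : K.X m), Bd K m k → Bd Y m k.1 := by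
      rintro m k ⟨j, rfl, z, rfl⟩
      exact bd_d Y j z.1
    have hH : ∀ y : Y.X n, Hmem Y n y → y ≠ Y.pt n → g n y ≠ Z.pt n := by
      intro y hm hne hy
      rcases (hmem_iff _ _ _).1 hm with hm | ⟨-, hd, hb⟩
      · exact hne hm
      · exact hb (hKY _ _ (key n y hy hne hd))
    have hmem : ∀ y : Y.X n, Hmem Y n y → Hmem Z n (g n y) := by
      intro y hm
      rcases (hmem_iff _ _ _).1 hm with h | ⟨hne, hd, hb⟩
      · exact Or.inl (h ▸ hg.1 n)
      · have hgy := hH y hm hne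
        exact (hmem_iff _ _ _).2 (Or.inr ⟨hgy, by rw [← hg.2.2, hd, hg.1],
          fun h => hb (bd_lift Y Z g hg hgsurj n y hgy h)⟩)
    have hval : ∀ y : HT Y n, Hmap Y Z g n y = ⟨g n y.1, hmem y.1 y.2⟩ := by
      intro y
      exact dif_pos (hmem y.1 y.2)
    constructor
    · intro a b hab
      rw [hval, hval] at hab
      have hab : g n a.1 = g n b.1 := congrArg Subtype.val hab
      apply Subtype.ext
      by_cases h : g n a.1 = Z.pt n
      · have ha : a.1 = Y.pt n := by
          by_contra hne
          exact hH _ a.2 hne h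
        have hb : b.1 = Y.pt n := by
          by_contra hne
          exact hH _ b.2 hne (hab ▸ h)
        rw [ha, hb]
      · exact hg.2.1 n _ _ hab h
    · rintro ⟨z, hz⟩
      obtain ⟨y, rfl⟩ := hgsurj n z
      rcases (hmem_iff _ _ _).1 hz with h | ⟨hne, hd, hb⟩
      · refine ⟨Hpt Y n, ?_⟩
        rw [hval]
        exact Subtype.ext ((hg.1 n).trans h.symm)
      · have hyne : y ≠ Y.pt n := fun h => hne (h ▸ hg.1 n)
        have hdy : Y.d n y = Y.pt (n - 1) := by
          by_contra hdne
          obtain ⟨j, hj, k, hk⟩ := key (n - 1) (Y.d n y) (by rw [hg.2.2, hd]) hdne (hY.2.2 n y)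
          obtain rfl : j = n := by omega
          have hk : Y.d j k.1 = Y.d j y := congrArg Subtype.val hk
          have : k.1 = y := hY.2.1 _ _ _ hk (hk ▸ hdne)
          exact hne (this ▸ k.2)
        refine ⟨⟨y, (hmem_iff _ _ _).2 (Or.inr ⟨hyne, hdy, fun h => hb (bd_map Y Z g hg n y h)⟩)⟩, ?_⟩
        exact hval _
end

section
/- (Factorization of chain maps.) Let f : X → Y be a chain map of chain complexes of pointed sets. Define Zₙ = {x ∈ Xₙ : fₙ(x) ≠ ∗} ∪ {∗} with differential d^Z(x) = d^X(x) if fₙ₋₁(d^X(x)) ≠ ∗, and d^Z(x) = ∗ otherwise. Then Z is a chain complex of pointed sets (its differentials are pointed, injective away from the basepoint, and consecutive differentials compose to the constant map at ∗); the maps qₙ : Xₙ → Zₙ given by qₙ(x) = x if fₙ(x) ≠ ∗ and qₙ(x) = ∗ otherwise form a chain map with each qₙ surjective and injective away from the basepoint; the maps mₙ : Zₙ → Yₙ given by mₙ(x) = fₙ(x) (and ∗ ↦ ∗) form a chain map with each mₙ injective; and fₙ = mₙ ∘ qₙ for all n. -/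
open Classical in
/-- **Factorization of chain maps.** Every chain map `f : X → Y` of chain complexes of
pointed sets factors as `f = m ∘ q` where `Zₙ = {x ∈ Xₙ : fₙ(x) ≠ ∗} ∪ {∗}` (with
differential `d(x) = dˣ(x)` if `fₙ₋₁(dˣ(x)) ≠ ∗` and `∗` otherwise) is a chain complex
of pointed sets, `q : X → Z` is a chain map which is levelwise surjective and injective
away from the basepoint, and `m : Z → Y` is a chain map which is levelwise injective. -/
theorem stmt12 (X Y : PreCC) (hX : X.IsComplex) (hY : Y.IsComplex)
    (f : ∀ n, X.X n → Y.X n) (hf : IsChainMap X Y f) :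
    let Z : PreCC :=
      ⟨fun n => {x : X.X n // x = X.pt n ∨ f n x ≠ Y.pt n},
       fun n => ⟨X.pt n, Or.inl rfl⟩,
       fun n x =>
         if h : f (n - 1) (X.d n x.1) ≠ Y.pt (n - 1) then ⟨X.d n x.1, Or.inr h⟩
         else ⟨X.pt (n - 1), Or.inl rfl⟩⟩
    let q : ∀ n, X.X n → Z.X n := fun n x =>
      if h : f n x ≠ Y.pt n then ⟨x, Or.inr h⟩ else ⟨X.pt n, Or.inl rfl⟩
    let m : ∀ n, Z.X n → Y.X n := fun n x => f n x.1
    Z.IsComplex ∧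
    IsChainMap X Z q ∧ (∀ n, Function.Surjective (q n)) ∧
    IsChainMap Z Y m ∧ (∀ n, Function.Injective (m n)) ∧
    (∀ n, ∀ x : X.X n, f n x = m n (q n x)) := by
  obtain ⟨hf0, hf1, hf2⟩ := hf
  obtain ⟨hY0, hY1, hY2⟩ := hY
  intro Z q m
  have m0 : ∀ n, m n (Z.pt n) = Y.pt n := fun n => hf0 n
  have mi : ∀ n, Function.Injective (m n) := by
    intro n a b hab
    apply Subtype.ext
    by_cases h : f n a.1 = Y.pt n
    · have ha : a.1 = X.pt n := a.2.resolve_right (fun h' => h' h)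
      have hb : b.1 = X.pt n := b.2.resolve_right (fun h' => h' (hab.symm.trans h))
      rw [ha, hb]
    · exact hf1 n _ _ hab h
  have mq : ∀ n, ∀ x : X.X n, m n (q n x) = f n x := by
    intro n x
    by_cases h : f n x = Y.pt n
    · have hq : q n x = ⟨X.pt n, Or.inl rfl⟩ := dif_neg (not_not.mpr h)
      rw [hq, h]
      exact hf0 n
    · have hq : q n x = ⟨x, Or.inr h⟩ := dif_pos h
      rw [hq]
  have md : ∀ n, ∀ x : Z.X n, m (n - 1) (Z.d n x) = Y.d n (m n x) := by
    intro n x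
    have h1 : m (n - 1) (Z.d n x) = f (n - 1) (X.d n x.1) := mq (n - 1) (X.d n x.1)
    rw [h1]
    exact hf2 n x.1
  refine ⟨⟨?_, ?_, ?_⟩, ⟨?_, ?_, ?_⟩, ?_, ⟨m0, ?_, md⟩, mi, fun n x => (mq n x).symm⟩
  · intro n
    apply mi
    rw [md, m0, m0, hY0]
  · intro n a b hab hne
    apply mi
    apply hY1
    · rw [← md, ← md, hab]
    · intro h
      apply hne
      apply mi
      rw [md, m0, h]
  · intro n x
    apply mi
    rw [md, md, m0, hY2]
  · intro n
    apply mi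
    rw [mq, m0, hf0]
  · intro n a b hab hne
    apply hf1
    · rw [← mq, ← mq, hab]
    · intro h
      apply hne
      apply mi
      rw [mq, m0, h]
  · intro n x
    apply mi
    rw [mq, md, mq, hf2]
  · intro n z
    exact ⟨z.1, mi n (mq n z.1)⟩
  · intro n a b hab _
    exact mi n hab
end

section
/- Let X be a chain complex of pointed sets. Let H(X) denote the chain complex whose n-th pointed set is Hₙ(X) and whose differentials are constant at the basepoint. Then the levelwise maps qₙ : Xₙ → Hₙ(X), given by qₙ(x) = x if x ∈ Hₙ(X) and qₙ(x) = ∗ otherwise, form a chain map q : X → H(X) with each qₙ surjective and injective away from the basepoint, and q is a quasi-isomorphism: for every n the induced map Hₙ(q) : Hₙ(X) → Hₙ(H(X)) is a pointed bijection. -/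
theorem exists_castX_d (C : PreCC) {n k : ℤ} (h : k = n) (h' : k - 1 = n - 1) (x : C.X n) :
    ∃ z : C.X k, C.castX h' (C.d k z) = C.d n x := by
  subst h; exact ⟨x, rfl⟩

theorem hmem_d (C : PreCC) (n : ℤ) (x : C.X n) (h : Hmem C (n - 1) (C.d n x)) :
    C.d n x = C.pt (n - 1) := by
  rcases h with h | ⟨-, -, h⟩
  · exact h
  · obtain ⟨z, hz⟩ := exists_castX_d C (show n - 1 + 1 = n by omega)
      (show n - 1 + 1 - 1 = n - 1 by omega) x
    exact absurd hz (h z)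

open Classical in
/-- For a chain complex of pointed sets `C`, the levelwise maps `qₙ : Cₙ → Hₙ(C)`
(`qₙ(x) = x` if `x ∈ Hₙ(C)` and `qₙ(x) = ∗` otherwise) into the homology complex `H(C)`
(whose `n`-th pointed set is `Hₙ(C)` and whose differentials are constant at the
basepoint) form a chain map `q : C → H(C)` which is levelwise surjective and injective
away from the basepoint, and which is a quasi-isomorphism: each induced map
`Hₙ(q) : Hₙ(C) → Hₙ(H(C))` is a pointed bijection. -/
theorem stmt14 (C : PreCC) (hC : C.IsComplex) :
    let HC : PreCC := ⟨fun n => HT C n, fun n => Hpt C n, fun n _ => Hpt C (n - 1)⟩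
    let q : ∀ n, C.X n → HC.X n := fun n x =>
      if h : Hmem C n x then ⟨x, h⟩ else Hpt C n
    IsChainMap C HC q ∧ (∀ n, Function.Surjective (q n)) ∧
    (∀ n : ℤ, Hmap C HC q n (Hpt C n) = Hpt HC n ∧
      Function.Bijective (Hmap C HC q n)) := by
  intro HC q
  have hall : ∀ n (y : HC.X n), Hmem HC n y := by
    intro n y
    by_cases hy : y = HC.pt n
    · exact Or.inl hy
    · refine Or.inr ⟨hy, rfl, fun z hz => hy ?_⟩
      rw [← hz]
      exact castX_pt HC _
  have hq : ∀ n (x : C.X n) (h : Hmem C n x), q n x = (⟨x, h⟩ : HT C n) :=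
    fun n x h => dif_pos h
  have hq' : ∀ n (x : C.X n), ¬ Hmem C n x → q n x = Hpt C n :=
    fun n x h => dif_neg h
  have hm : ∀ n (x : HT C n), Hmap C HC q n x = (⟨x, hall n x⟩ : HT HC n) := by
    intro n x
    have h1 : q n x.1 = x := hq n x.1 x.2
    refine (dif_pos (hall n _)).trans ?_
    exact Subtype.ext h1
  refine ⟨⟨fun n => hq n _ (Or.inl rfl), ?_, ?_⟩, fun n y => ⟨y.1, hq n y.1 y.2⟩,
    fun n => ⟨hm n _, ?_, ?_⟩⟩
  · intro n a b hab hne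
    by_cases ha : Hmem C n a
    · by_cases hb : Hmem C n b
      · rw [hq n a ha, hq n b hb] at hab
        exact congrArg Subtype.val hab
      · exact absurd (hab.trans (hq' n b hb)) hne
    · exact absurd (hq' n a ha) hne
  · intro n x
    change q (n - 1) (C.d n x) = Hpt C (n - 1)
    by_cases h : Hmem C (n - 1) (C.d n x)
    · rw [hq _ _ h]
      exact Subtype.ext (hmem_d C n x h)
    · exact hq' _ _ h
  · intro a b hab
    rw [hm, hm] at hab
    exact congrArg Subtype.val hab
  · intro y
    exact ⟨y.1, hm n y.1⟩
end
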